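/- There exists a universal constant C > 0 such that for all positive integers n, T with T ≤ n and every matrix A ∈ [−1,1]^{n×T}, there exists a sign vector x ∈ {−1,+1}^T with ‖Ax‖_∞ ≤ C·√(T·ln(e·n/T)). -/

import Mathlib

open Finset
open scoped Classical

/-- The real sign `±1` attached to a Boolean. -/
def boolSign (b : Bool) : ℝ := if b then 1 else -1

/-- The signed sum `∑ j, ± a j` attached to a Boolean vector. -/
noncomputable def signedSum {ι : Type} [Fintype ι] (a : ι → ℝ) (x : ι → Bool) : ℝ :=
  ∑ j, a j * boolSign (x j)

/-- Summing a product of coordinatewise weights over the cube factorizes. -/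
lemma sum_cube_prod {ι : Type} [Fintype ι] (f : ι → Bool → ℝ) :
    ∑ x : ι → Bool, ∏ j, f j (x j) = ∏ j, (f j true + f j false) := by
  have h := Finset.prod_univ_sum (fun _ : ι => (Finset.univ : Finset Bool)) f
  rw [Fintype.piFinset_univ] at h
  rw [← h]
  simp

/-- Sub-Gaussian bound for the moment generating function of a random signed sum. -/
lemma sum_exp_signedSum_le {ι : Type} [Fintype ι] (a : ι → ℝ)
    (ha : ∀ j, a j ∈ Set.Icc (-1 : ℝ) 1) (t : ℝ) :
    ∑ x : ι → Bool, Real.exp (t * signedSum a x) ≤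
      2 ^ Fintype.card ι * Real.exp (t ^ 2 * Fintype.card ι / 2) := by
  have h1 : ∀ x : ι → Bool, Real.exp (t * signedSum a x) =
      ∏ j, Real.exp (t * (a j * boolSign (x j))) := fun x => by
    rw [← Real.exp_sum, signedSum, Finset.mul_sum]
  simp_rw [h1]
  rw [sum_cube_prod (fun j b => Real.exp (t * (a j * boolSign b)))]
  have h2 : ∀ j ∈ (Finset.univ : Finset ι),
      Real.exp (t * (a j * boolSign true)) + Real.exp (t * (a j * boolSign false)) ≤
        2 * Real.exp (t ^ 2 / 2) := fun j _ => by
    have hc := Real.cosh_le_exp_half_sq (t * a j)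
    rw [Real.cosh_eq] at hc
    have hsq : (t * a j) ^ 2 / 2 ≤ t ^ 2 / 2 := by
      have : (a j) ^ 2 ≤ 1 := by
        have := (ha j).1
        have := (ha j).2
        nlinarith
      nlinarith [sq_nonneg t]
    have he := Real.exp_le_exp.2 hsq
    simp only [boolSign, if_true, Bool.false_eq_true, if_false, mul_one, mul_neg]
    linarith
  refine (Finset.prod_le_prod (fun j _ => by positivity) h2).trans (le_of_eq ?_)
  rw [Finset.prod_const, Finset.card_univ, mul_pow, ← Real.exp_nat_mul]
  congr 2
  ring

/-- Volume bound for Hamming balls of radius `m / 4` in the `m`-dimensional cube. -/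
lemma card_le_of_hammingDist_le {ι : Type} [Fintype ι] (x₀ : ι → Bool)
    (S : Finset (ι → Bool)) (hS : ∀ x ∈ S, 4 * hammingDist x₀ x ≤ Fintype.card ι) :
    (#S : ℝ) ≤ (337 / 192 : ℝ) ^ Fintype.card ι := by
  have hsum : ∑ x : ι → Bool, ((3 / 4 : ℝ) ^ 4) ^ hammingDist x₀ x =
      (337 / 256 : ℝ) ^ Fintype.card ι := by
    have h1 : ∀ x : ι → Bool, ((3 / 4 : ℝ) ^ 4) ^ hammingDist x₀ x =
        ∏ j, (if x₀ j ≠ x j then ((3 / 4 : ℝ) ^ 4) else 1) := fun x => by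
      rw [Finset.prod_ite]
      simp [hammingDist]
    simp_rw [h1]
    rw [sum_cube_prod (fun j b => if x₀ j ≠ b then ((3 / 4 : ℝ) ^ 4) else 1)]
    rw [Finset.prod_congr rfl (g := fun _ => (337 / 256 : ℝ)), Finset.prod_const,
      Finset.card_univ]
    intro j _
    cases x₀ j <;> norm_num
  have hle : (#S : ℝ) * (3 / 4 : ℝ) ^ Fintype.card ι ≤ (337 / 256 : ℝ) ^ Fintype.card ι := by
    rw [← hsum, ← nsmul_eq_mul, ← Finset.sum_const]
    refine (Finset.sum_le_sum fun x hx => ?_).trans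
      (Finset.sum_le_univ_sum_of_nonneg fun x => by positivity)
    rw [← pow_mul]
    exact pow_le_pow_of_le_one (by norm_num) (by norm_num) (hS x hx)
  rw [← le_div_iff₀ (by positivity), ← div_pow] at hle
  norm_num at hle ⊢
  exact hle

/-- A two-sided geometric sum over the integers with small ratio. -/
lemma sum_pow_natAbs_le {q : ℝ} (hq0 : 0 ≤ q) (hq : q ≤ 1 / 100) (F : Finset ℤ) :
    ∑ k ∈ F, q ^ k.natAbs ≤ Real.exp (3 * q) := by
  have hq1 : q < 1 := by linarith
  have h := HasSum.of_nat_of_neg_add_one (f := fun k : ℤ => q ^ k.natAbs)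
    (m := (1 - q)⁻¹) (m' := q * (1 - q)⁻¹)
    (by simpa using hasSum_geometric_of_lt_one hq0 hq1)
    (by
      have hshift : (fun k : ℕ => q ^ (-((k : ℤ) + 1)).natAbs) = fun k => q * q ^ k := by
        funext k
        rw [← pow_succ', show (-((k : ℤ) + 1)).natAbs = k + 1 by omega]
      rw [hshift]
      exact (hasSum_geometric_of_lt_one hq0 hq1).mul_left q)
  refine (sum_le_hasSum F (fun k _ => by positivity) h).trans ?_
  refine le_trans ?_ (Real.add_one_le_exp (3 * q))
  have : (1 - q)⁻¹ + q * (1 - q)⁻¹ = (1 + q) / (1 - q) := by ring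
  rw [this, div_le_iff₀ (by linarith)]
  nlinarith

/-- Jensen's inequality for `exp (-g)` over a finite type, with an upper bound for the mean. -/
lemma card_mul_exp_le_sum_exp {α : Type} [Fintype α] (g : α → ℝ) (G : ℝ)
    (hg : ∑ x, g x ≤ Fintype.card α * G) :
    Fintype.card α * Real.exp (-G) ≤ ∑ x, Real.exp (-g x) := by
  have h : ∀ x ∈ (Finset.univ : Finset α),
      Real.exp (-G) * (1 + G - g x) ≤ Real.exp (-g x) := fun x _ => by
    have h1 := Real.add_one_le_exp (G - g x)
    have h2 : Real.exp (-g x) = Real.exp (-G) * Real.exp (G - g x) := by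
      rw [← Real.exp_add]; ring_nf
    rw [h2]
    exact mul_le_mul_of_nonneg_left (by linarith) (Real.exp_pos _).le
  refine le_trans ?_ (Finset.sum_le_sum h)
  rw [← Finset.mul_sum, Finset.sum_sub_distrib, Finset.sum_const, Finset.card_univ, nsmul_eq_mul]
  nlinarith [Real.exp_pos (-G)]

/-- A rounded real is dominated by an exponential that is small below the rounding threshold. -/
lemma natAbs_round_half_le {s u : ℝ} (hs : 1 ≤ s) :
    ((round (u / 2)).natAbs : ℝ) ≤ Real.exp (s * (|u| - 1)) := by
  have habs : ((round (u / 2)).natAbs : ℝ) = |(round (u / 2) : ℝ)| := by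
    rw [Nat.cast_natAbs, Int.cast_abs]
  have hr := abs_sub_round (u / 2)
  by_cases h0 : round (u / 2) = 0
  · simp [h0, Real.exp_nonneg]
  · have h1 : (1 : ℝ) ≤ |(round (u / 2) : ℝ)| := by
      rw [← Int.cast_abs]
      exact_mod_cast Int.one_le_abs h0
    have h2 : |(round (u / 2) : ℝ)| ≤ |u| / 2 + 1 / 2 := by
      have h3 := abs_sub_abs_le_abs_sub (round (u / 2) : ℝ) (u / 2)
      rw [abs_sub_comm] at hr
      rw [abs_div, abs_two] at h3
      linarith
    rw [habs]
    have h4 := Real.add_one_le_exp (s * (|u| - 1))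
    nlinarith

/-- The rounded signed sums at scale `4 √(m L)` are zero on average up to `2 exp (-8 L)`. -/
lemma sum_natAbs_round_le {ι : Type} [Fintype ι] [Nonempty ι] (a : ι → ℝ)
    (ha : ∀ j, a j ∈ Set.Icc (-1 : ℝ) 1) {L : ℝ} (hL : 1 ≤ L) :
    ∑ x : ι → Bool,
        ((round (signedSum a x / (4 * √(Fintype.card ι * L)) / 2)).natAbs : ℝ) ≤
      2 ^ Fintype.card ι * (2 * Real.exp (-8 * L)) := by
  have hm : (0 : ℝ) < Fintype.card ι := by exact_mod_cast Fintype.card_pos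
  set m : ℝ := (Fintype.card ι : ℝ)
  set D : ℝ := 4 * √(m * L) with hD
  have hDpos : 0 < D := by positivity
  have hDsq : D ^ 2 = 16 * (m * L) := by
    rw [hD, mul_pow, Real.sq_sqrt (by positivity)]; norm_num
  set t : ℝ := 16 * L / D with ht
  have htsq : t ^ 2 * m / 2 = 8 * L := by
    rw [ht, div_pow, hDsq]; field_simp; norm_num
  have hpt : ∀ x ∈ (Finset.univ : Finset (ι → Bool)),
      ((round (signedSum a x / D / 2)).natAbs : ℝ) ≤
        Real.exp (-16 * L) *
          (Real.exp (t * signedSum a x) + Real.exp (-t * signedSum a x)) := fun x _ => by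
    refine (natAbs_round_half_le (s := 16 * L) (by linarith)).trans ?_
    have h1 : 16 * L * (|signedSum a x / D| - 1) = -16 * L + t * |signedSum a x| := by
      rw [abs_div, abs_of_pos hDpos, ht]; ring
    rw [h1, Real.exp_add]
    refine mul_le_mul_of_nonneg_left ?_ (Real.exp_pos _).le
    rcases abs_cases (signedSum a x) with ⟨h, _⟩ | ⟨h, _⟩ <;> rw [h]
    · linarith [Real.exp_pos (-t * signedSum a x)]
    · rw [mul_neg, ← neg_mul]
      linarith [Real.exp_pos (t * signedSum a x)]
  refine (Finset.sum_le_sum hpt).trans ?_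
  rw [← Finset.mul_sum, Finset.sum_add_distrib]
  have h1 := sum_exp_signedSum_le a ha t
  have h2 := sum_exp_signedSum_le a ha (-t)
  rw [neg_sq] at h2
  rw [htsq] at h1 h2
  have h3 : Real.exp (-8 * L) = Real.exp (-16 * L) * Real.exp (8 * L) := by
    rw [← Real.exp_add]; ring_nf
  rw [h3]
  nlinarith [Real.exp_pos (-16 * L)]

/-- Pigeonhole principle with product weights `q ^ |b i|` on integer vectors. -/
lemma sum_prod_pow_natAbs_le {α : Type} [Fintype α] {n : ℕ} (b : α → Fin n → ℤ) {q N : ℝ}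
    (hq0 : 0 ≤ q) (hq : q ≤ 1 / 100) (hN0 : 0 ≤ N)
    (hN : ∀ v, (#{x | b x = v} : ℝ) ≤ N) :
    ∑ x, ∏ i, q ^ (b x i).natAbs ≤ N * Real.exp (3 * q * n) := by
  let F : Finset ℤ := (Finset.univ : Finset (α × Fin n)).image fun p => b p.1 p.2
  have hmaps : ∀ x ∈ (Finset.univ : Finset α), b x ∈ Fintype.piFinset fun _ : Fin n => F :=
    fun x _ => Fintype.mem_piFinset.2 fun i =>
      Finset.mem_image.2 ⟨(x, i), Finset.mem_univ _, rfl⟩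
  rw [← Finset.sum_fiberwise_of_maps_to hmaps]
  have hfib : ∀ v ∈ Fintype.piFinset fun _ : Fin n => F,
      ∑ x with b x = v, ∏ i, q ^ (b x i).natAbs ≤ N * ∏ i, q ^ (v i).natAbs := fun v _ => by
    rw [Finset.sum_congr rfl (g := fun _ => ∏ i, q ^ (v i).natAbs)
      fun x hx => by rw [(Finset.mem_filter.1 hx).2], Finset.sum_const, nsmul_eq_mul]
    exact mul_le_mul_of_nonneg_right (hN v) (by positivity)
  refine (Finset.sum_le_sum hfib).trans ?_
  rw [← Finset.mul_sum, ← Finset.prod_univ_sum (fun _ : Fin n => F) fun _ k => q ^ k.natAbs]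
  refine mul_le_mul_of_nonneg_left ?_ hN0
  rw [Finset.prod_const, Finset.card_univ, Fintype.card_fin, mul_comm _ (n : ℝ), Real.exp_nat_mul]
  exact pow_le_pow_left₀ (Finset.sum_nonneg fun k _ => by positivity)
    (sum_pow_natAbs_le hq0 hq F) n

/-- Two far apart Boolean vectors have the same rounded signed sums in every row. -/
lemma exists_far_round_eq {n : ℕ} {ι : Type} [Fintype ι] [Nonempty ι]
    (hn : Fintype.card ι ≤ n) (A : Fin n → ι → ℝ) (hA : ∀ i j, A i j ∈ Set.Icc (-1 : ℝ) 1) {L : ℝ}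
    (hL : L = Real.log (Real.exp 1 * n / Fintype.card ι)) :
    ∃ x y : ι → Bool, Fintype.card ι < 4 * hammingDist x y ∧
      ∀ i, round (signedSum (A i) x / (4 * √(Fintype.card ι * L)) / 2) =
        round (signedSum (A i) y / (4 * √(Fintype.card ι * L)) / 2) := by
  have hmpos : 0 < Fintype.card ι := Fintype.card_pos
  have hm : (0 : ℝ) < Fintype.card ι := by exact_mod_cast hmpos
  have hnpos : (0 : ℝ) < n := by exact_mod_cast hmpos.trans_le hn
  have hmn : (Fintype.card ι : ℝ) ≤ n := by exact_mod_cast hn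
  have hexpL : Real.exp L = Real.exp 1 * n / Fintype.card ι := by
    rw [hL, Real.exp_log (by positivity)]
  have hL1 : 1 ≤ L := by
    rw [← Real.exp_le_exp, hexpL, le_div_iff₀ hm]
    exact mul_le_mul_of_nonneg_left hmn (Real.exp_pos _).le
  by_contra! hcon
  set b : (ι → Bool) → Fin n → ℤ := fun x i =>
    round (signedSum (A i) x / (4 * √(Fintype.card ι * L)) / 2) with hb
  set q : ℝ := Real.exp (-(4 + L)) with hqdef
  have hnm : (n : ℝ) = Real.exp (L - 1) * Fintype.card ι := by
    rw [Real.exp_sub, hexpL]; field_simp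
  have he1 : (2.7 : ℝ) < Real.exp 1 := by linarith [Real.exp_one_gt_d9]
  have he5 : (100 : ℝ) ≤ Real.exp 5 := by
    have : Real.exp 5 = Real.exp 1 ^ 5 := by rw [← Real.exp_nat_mul]; norm_num
    rw [this]
    calc (100 : ℝ) ≤ 2.7 ^ 5 := by norm_num
      _ ≤ _ := pow_le_pow_left₀ (by norm_num) he1.le 5
  have hem5 : Real.exp (-5) ≤ 1 / 100 := by
    rw [Real.exp_neg, ← one_div]
    exact one_div_le_one_div_of_le (by norm_num) he5
  have hq : q ≤ 1 / 100 := (Real.exp_le_exp.2 (by linarith)).trans hem5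
  have hqn : q * n ≤ 1 / 100 * Fintype.card ι := by
    rw [hnm, ← mul_assoc, hqdef, ← Real.exp_add]
    ring_nf at hem5 ⊢
    nlinarith
  have hN : ∀ v, (#{x | b x = v} : ℝ) ≤ (337 / 192 : ℝ) ^ Fintype.card ι := fun v => by
    rcases Finset.eq_empty_or_nonempty (Finset.univ.filter fun x => b x = v) with h | ⟨x₀, h₀⟩
    · rw [h]; simp only [Finset.card_empty, Nat.cast_zero]; positivity
    · refine card_le_of_hammingDist_le x₀ _ fun x hx => ?_
      by_contra! hlt
      obtain ⟨i, hi⟩ := hcon x₀ x hlt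
      exact hi (congrFun ((Finset.mem_filter.1 h₀).2.trans (Finset.mem_filter.1 hx).2.symm) i)
  have hupper := sum_prod_pow_natAbs_le b (Real.exp_pos _).le hq (by positivity) hN
  have hlower := card_mul_exp_le_sum_exp (fun x => (4 + L) * ∑ i, ((b x i).natAbs : ℝ))
    ((4 + L) * (n * (2 * Real.exp (-8 * L)))) (by
      rw [← Finset.mul_sum, Finset.sum_comm]
      have h := Finset.sum_le_sum fun i (_ : i ∈ (Finset.univ : Finset (Fin n))) =>
        sum_natAbs_round_le (A i) (hA i) hL1
      rw [Finset.sum_const, Finset.card_univ, Fintype.card_fin, nsmul_eq_mul] at h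
      have h' := mul_le_mul_of_nonneg_left h (show 0 ≤ 4 + L by linarith)
      refine h'.trans (le_of_eq ?_)
      simp only [Fintype.card_fun, Fintype.card_bool]
      push_cast
      ring)
  have hweight : ∀ x, Real.exp (-((4 + L) * ∑ i, ((b x i).natAbs : ℝ))) =
      ∏ i, q ^ (b x i).natAbs := fun x => by
    rw [Finset.prod_pow_eq_pow_sum, hqdef, ← Real.exp_nat_mul]
    push_cast
    ring_nf
  simp_rw [hweight] at hlower
  have hG : (4 + L) * (n * (2 * Real.exp (-8 * L))) ≤ 7 / 100 * Fintype.card ι := by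
    have h1 : Real.exp (-8 * L) * n = Real.exp (-(7 * L + 1)) * Fintype.card ι := by
      rw [hnm, ← mul_assoc, ← Real.exp_add]; ring_nf
    have h2 : 4 + L ≤ 5 * Real.exp L := by
      nlinarith [Real.add_one_le_exp L]
    have h3 : Real.exp L * Real.exp (-(7 * L + 1)) ≤ 7 / 1000 := by
      rw [← Real.exp_add]
      have h4 : L + -(7 * L + 1) ≤ -5 + -1 := by linarith
      have h5 : Real.exp (-1) ≤ 1 / 2.7 := by
        rw [Real.exp_neg, ← one_div]
        exact one_div_le_one_div_of_le (by norm_num) he1.le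
      refine (Real.exp_le_exp.2 h4).trans ?_
      rw [Real.exp_add]
      calc Real.exp (-5) * Real.exp (-1) ≤ 1 / 100 * (1 / 2.7) := by gcongr
        _ ≤ 7 / 1000 := by norm_num
    have h6 := Real.exp_pos (-(7 * L + 1))
    calc (4 + L) * (n * (2 * Real.exp (-8 * L)))
        = 2 * ((4 + L) * Real.exp (-(7 * L + 1))) * Fintype.card ι := by
          linear_combination 2 * (4 + L) * h1
      _ ≤ 2 * (5 * Real.exp L * Real.exp (-(7 * L + 1))) * Fintype.card ι := by gcongr
      _ ≤ 7 / 100 * Fintype.card ι := by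
          refine mul_le_mul_of_nonneg_right ?_ hm.le
          linarith
  have hfinal := hlower.trans hupper
  simp only [Fintype.card_fun, Fintype.card_bool] at hfinal
  push_cast at hfinal
  rw [Real.exp_neg, ← div_eq_mul_inv, div_le_iff₀ (Real.exp_pos _), mul_assoc,
    ← Real.exp_add] at hfinal
  have hexp : Real.exp (3 * q * n + (4 + L) * (n * (2 * Real.exp (-8 * L)))) ≤
      (10 / 9 : ℝ) ^ Fintype.card ι := by
    have h1 : Real.exp (1 / 10) ≤ 10 / 9 := by
      have := Real.add_one_le_exp (-(1 / 10) : ℝ)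
      rw [Real.exp_neg, ← one_div, le_div_iff₀ (Real.exp_pos _)] at this
      linarith
    refine le_trans ?_ (pow_le_pow_left₀ (Real.exp_pos _).le h1 _)
    rw [← Real.exp_nat_mul]
    refine Real.exp_le_exp.2 ?_
    linarith
  have hlt : ((337 / 192 : ℝ) * (10 / 9)) ^ Fintype.card ι < 2 ^ Fintype.card ι :=
    pow_lt_pow_left₀ (by norm_num) (by norm_num) hmpos.ne'
  rw [mul_pow] at hlt
  have hmul := mul_le_mul_of_nonneg_left hexp
    (show (0 : ℝ) ≤ (337 / 192 : ℝ) ^ Fintype.card ι by positivity)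
  linarith

/-- Partial coloring: more than a quarter of the columns receive a sign, at small discrepancy. -/
lemma exists_partial_coloring {n : ℕ} {ι : Type} [Fintype ι] [Nonempty ι]
    (hn : Fintype.card ι ≤ n) (A : Fin n → ι → ℝ) (hA : ∀ i j, A i j ∈ Set.Icc (-1 : ℝ) 1) :
    ∃ y : ι → ℝ, (∀ j, y j = 0 ∨ y j = -1 ∨ y j = 1) ∧
      4 * Fintype.card {j // y j = 0} ≤ 3 * Fintype.card ι ∧
      ∀ i, |∑ j, A i j * y j| ≤
        4 * √(Fintype.card ι * Real.log (Real.exp 1 * n / Fintype.card ι)) := by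
  obtain ⟨x, z, hdist, hround⟩ := exists_far_round_eq hn A hA rfl
  have hm : (0 : ℝ) < Fintype.card ι := by exact_mod_cast Fintype.card_pos
  have hmn : (Fintype.card ι : ℝ) ≤ n := by exact_mod_cast hn
  have hlog : 0 < Real.log (Real.exp 1 * n / Fintype.card ι) := by
    apply Real.log_pos
    rw [lt_div_iff₀ hm]
    nlinarith [Real.exp_one_gt_d9]
  set D := 4 * √(Fintype.card ι * Real.log (Real.exp 1 * n / Fintype.card ι)) with hD
  have hDpos : 0 < D := by positivity
  have hzero : ∀ j, (boolSign (x j) - boolSign (z j)) / 2 = 0 ↔ x j = z j := fun j => by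
    cases x j <;> cases z j <;> norm_num [boolSign]
  refine ⟨fun j => (boolSign (x j) - boolSign (z j)) / 2, fun j => ?_, ?_, fun i => ?_⟩
  · beta_reduce
    cases x j <;> cases z j <;> norm_num [boolSign]
  · simp only [hzero]
    rw [Fintype.card_subtype]
    have h := Finset.card_filter_add_card_filter_not (s := (Finset.univ : Finset ι))
      (fun j => x j = z j)
    rw [Finset.card_univ] at h
    have hd : hammingDist x z = #{j | ¬ x j = z j} := by
      unfold hammingDist
      congr
    omega
  · have hsum : ∑ j, A i j * ((boolSign (x j) - boolSign (z j)) / 2) =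
        (signedSum (A i) x / D / 2 - signedSum (A i) z / D / 2) * D := by
      field_simp
      rw [signedSum, signedSum, ← Finset.sum_sub_distrib, ← Finset.sum_div]
      rw [mul_div_cancel₀ _ two_ne_zero]
      exact Finset.sum_congr rfl fun j _ => by ring
    rw [hsum, abs_mul, abs_of_pos hDpos]
    have h1 := abs_le.1 (abs_sub_round (signedSum (A i) x / D / 2))
    have h2 := abs_le.1 (abs_sub_round (signedSum (A i) z / D / 2))
    have h3 := hround i
    rw [h3] at h1
    have h4 : |signedSum (A i) x / D / 2 - signedSum (A i) z / D / 2| ≤ 1 :=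
      abs_le.2 ⟨by linarith, by linarith⟩
    nlinarith

/-- The discrepancy bound contracts when the number of columns drops by a quarter. -/
lemma sqrt_mul_log_contract {n m k : ℝ} (hk : 0 ≤ k) (hm : 0 < m) (hmn : m ≤ n)
    (hkm : 4 * k ≤ 3 * m) :
    √(k * Real.log (Real.exp 1 * n / k)) ≤
      995 / 1000 * √(m * Real.log (Real.exp 1 * n / m)) := by
  rcases hk.eq_or_lt with rfl | hk
  · simp only [zero_mul, Real.sqrt_zero]; positivity
  have hn : 0 < n := hm.trans_le hmn
  set ρ := k / m with hρ
  have hρpos : 0 < ρ := by positivity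
  have hρle : ρ ≤ 3 / 4 := by rw [hρ, div_le_iff₀ hm]; linarith
  have hkρ : k = ρ * m := by rw [hρ]; field_simp
  set L := Real.log (Real.exp 1 * n / m) with hL
  have hL1 : 1 ≤ L := by
    rw [hL, Real.le_log_iff_exp_le (by positivity), le_div_iff₀ hm]
    exact mul_le_mul_of_nonneg_left hmn (Real.exp_pos _).le
  have hlogk : Real.log (Real.exp 1 * n / k) = L - Real.log ρ := by
    rw [hL, ← Real.log_div (by positivity) (by positivity), hkρ]
    congr 1
    field_simp
  set u := √ρ with hu
  have hupos : 0 < u := Real.sqrt_pos.2 hρpos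
  have husq : u ^ 2 = ρ := Real.sq_sqrt hρpos.le
  have hlogρ : -Real.log ρ ≤ 2 * (u⁻¹ - 1) := by
    have h := Real.log_le_sub_one_of_pos (inv_pos.2 hupos)
    rw [Real.log_inv] at h
    rw [← husq, Real.log_pow]
    push_cast
    linarith
  have hlogρ0 : 0 ≤ -Real.log ρ := by
    linarith [Real.log_nonpos hρpos.le (by linarith)]
  have hule : u ≤ 867 / 1000 := by nlinarith
  have hcoef : ρ * (1 - Real.log ρ) ≤ (995 / 1000) ^ 2 := by
    have h1 : ρ * (1 - Real.log ρ) ≤ ρ * (2 * u⁻¹ - 1) :=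
      mul_le_mul_of_nonneg_left (by linarith) hρpos.le
    have h2 : ρ * (2 * u⁻¹ - 1) = 2 * u - u ^ 2 := by
      rw [← husq]; field_simp
    rw [h2] at h1
    nlinarith
  have hmain : k * Real.log (Real.exp 1 * n / k) ≤ (995 / 1000) ^ 2 * (m * L) := by
    rw [hlogk, hkρ]
    have h1 : L - Real.log ρ ≤ (1 - Real.log ρ) * L := by nlinarith
    calc ρ * m * (L - Real.log ρ) ≤ ρ * m * ((1 - Real.log ρ) * L) := by gcongr
      _ = ρ * (1 - Real.log ρ) * (m * L) := by ring
      _ ≤ _ := by gcongr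
  refine (Real.sqrt_le_sqrt hmain).trans (le_of_eq ?_)
  rw [Real.sqrt_mul (by positivity), Real.sqrt_sq (by norm_num)]

/-- Full coloring by iterated partial coloring. -/
lemma exists_coloring (n : ℕ) {ι : Type} [Fintype ι] (hn : Fintype.card ι ≤ n)
    (A : Fin n → ι → ℝ) (hA : ∀ i j, A i j ∈ Set.Icc (-1 : ℝ) 1) :
    ∃ x : ι → ℝ, (∀ j, x j = -1 ∨ x j = 1) ∧
      ∀ i, |∑ j, A i j * x j| ≤
        1000 * √(Fintype.card ι * Real.log (Real.exp 1 * n / Fintype.card ι)) := by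
  induction hc : Fintype.card ι using Nat.strong_induction_on generalizing ι with
  | _ m ih =>
    subst hc
    rcases isEmpty_or_nonempty ι with hι | hι
    · exact ⟨fun _ => 1, fun _ => Or.inr rfl, fun i => by simp⟩
    obtain ⟨y, hy, hcard, hdisc⟩ := exists_partial_coloring hn A hA
    have hpos : 0 < Fintype.card ι := Fintype.card_pos
    obtain ⟨z, hz, hzdisc⟩ := ih (Fintype.card {j // y j = 0}) (by omega) (ι := {j // y j = 0})
      (by omega) (fun i j => A i j) (fun i j => hA i j) rfl
    refine ⟨fun j => if h : y j = 0 then z ⟨j, h⟩ else y j, fun j => ?_, fun i => ?_⟩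
    · by_cases h : y j = 0
      · simpa [h] using hz ⟨j, h⟩
      · simpa [h] using hy j
    · have hsplit : ∑ j, A i j * (if h : y j = 0 then z ⟨j, h⟩ else y j) =
          ∑ j, A i j * y j + ∑ j : {j // y j = 0}, A i j * z j := by
        have hsub : ∑ j : {j // y j = 0}, A i j * z j =
            ∑ j, if h : y j = 0 then A i j * z ⟨j, h⟩ else 0 := by
          rw [Finset.sum_dite]
          simp only [Finset.sum_const_zero, add_zero]
          refine Finset.sum_bij (fun j _ => ⟨j.1, by simpa using j.2⟩) ?_ ?_ ?_ ?_
          · simp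
          · rintro ⟨a, ha⟩ _ ⟨b, hb⟩ _ h
            simpa using h
          · rintro ⟨a, ha⟩ _
            exact ⟨⟨a, by simpa using ha⟩, by simp, rfl⟩
          · simp
        rw [hsub, ← Finset.sum_add_distrib]
        refine Finset.sum_congr rfl fun j _ => ?_
        by_cases h : y j = 0 <;> simp [h]
      rw [hsplit]
      have hcontract := sqrt_mul_log_contract (n := n) (m := Fintype.card ι)
        (k := Fintype.card {j // y j = 0}) (by positivity) (by exact_mod_cast hpos)
        (by exact_mod_cast hn) (by exact_mod_cast hcard)
      have := abs_add_le (∑ j, A i j * y j) (∑ j : {j // y j = 0}, A i j * z j)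
      have := hdisc i
      have := hzdisc i
      linarith [Real.sqrt_nonneg
        (Fintype.card ι * Real.log (Real.exp 1 * n / Fintype.card ι))]

/-- Spencer's theorem in the regime `T ≤ n`: for any `A ∈ [-1,1]^{n×T}` there is a sign
vector `x ∈ {-1,+1}^T` with `‖Ax‖_∞ ≤ C √(T ln(e n / T))`. -/
theorem spencer_few_columns :
    ∃ C : ℝ, 0 < C ∧
      ∀ (n T : ℕ), 0 < T → T ≤ n →
        ∀ A : Matrix (Fin n) (Fin T) ℝ, (∀ i j, A i j ∈ Set.Icc (-1 : ℝ) 1) →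
          ∃ x : Fin T → ℝ, (∀ j, x j = -1 ∨ x j = 1) ∧
            ∀ i, |A.mulVec x i| ≤
              C * Real.sqrt ((T : ℝ) * Real.log (Real.exp 1 * (n : ℝ) / (T : ℝ))) := by
  refine ⟨1000, by norm_num, fun n T _ hTn A hA => ?_⟩
  obtain ⟨x, hx, hdisc⟩ := exists_coloring n (ι := Fin T) (by simpa using hTn) A hA
  refine ⟨x, hx, fun i => ?_⟩
  simpa [Matrix.mulVec, dotProduct] using hdisc i
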